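/- arXiv:1508.04837 — 4 statements merged into one kernel-verified Lean document; each statement's English description precedes it below -/
import Mathlib

section
/- Let T be a nonempty finite set and let 𝒞 and 𝒟 be partitions of T. Then the subspaces U_𝒞 and U_𝒟 of ℝ^T are orthogonal if and only if the partitions 𝒞 and 𝒟 are independent. -/
/-- Independence of two subsets of a finite set `T`:  `|A ∩ B| · |T| = |A| · |B|`. -/
def indep {T : Type} [Fintype T] [DecidableEq T] (B C : Finset T) : Prop :=
  (B ∩ C).card * Fintype.card T = B.card * C.card

/-- `P` is a partition of the finite set `T`: its blocks are nonempty and every point of `T`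
lies in exactly one block. -/
def IsPartition {T : Type} [Fintype T] (P : Set (Finset T)) : Prop :=
  (∀ B ∈ P, B.Nonempty) ∧ ∀ x : T, ∃! B, B ∈ P ∧ x ∈ B

/-- `U_𝒞`: the subspace of `ℝ^T` of contrast functions determined by a partition `𝒞` of `T`,
i.e. the functions that are constant on each block of `𝒞` and whose values sum to zero. -/
def Usub {T : Type} [Fintype T] (P : Set (Finset T)) : Submodule ℝ (T → ℝ) where
  carrier := {u | (∀ B ∈ P, ∀ x ∈ B, ∀ y ∈ B, u x = u y) ∧ ∑ x, u x = 0}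
  add_mem' := by
    rintro u v ⟨hu1, hu2⟩ ⟨hv1, hv2⟩
    refine ⟨fun B hB x hx y hy => ?_, ?_⟩
    · simp only [Pi.add_apply, hu1 B hB x hx y hy, hv1 B hB x hx y hy]
    · simpa [Finset.sum_add_distrib] using by rw [hu2, hv2, add_zero]
  zero_mem' := ⟨fun B hB x hx y hy => rfl, by simp⟩
  smul_mem' := by
    rintro c u ⟨hu1, hu2⟩
    refine ⟨fun B hB x hx y hy => ?_, ?_⟩
    · simp only [Pi.smul_apply, hu1 B hB x hx y hy]
    · simp [← Finset.mul_sum, hu2]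

theorem sum_zero_of_blocks {T : Type} [Fintype T] [DecidableEq T]
    (P : Set (Finset T)) (hP : IsPartition P) (u f : T → ℝ)
    (hu : ∀ B ∈ P, ∀ x ∈ B, ∀ y ∈ B, u x = u y)
    (hf : ∀ B ∈ P, ∑ x ∈ B, f x = 0) : ∑ x, u x * f x = 0 := by
  choose g hg hg' using hP.2
  rw [← Finset.sum_fiberwise Finset.univ g]
  refine Finset.sum_eq_zero fun B _ => ?_
  by_cases hB : B ∈ P
  · have h1 : Finset.univ.filter (fun x => g x = B) = B := by
      ext x
      simp only [Finset.mem_filter, Finset.mem_univ, true_and]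
      constructor
      · intro h
        exact h ▸ (hg x).2
      · intro h
        exact (hg' x B ⟨hB, h⟩).symm
    rw [h1]
    obtain ⟨y, hy⟩ := hP.1 B hB
    rw [Finset.sum_congr rfl (fun x hx => by rw [hu B hB x hx y hy]), ← Finset.mul_sum,
      hf B hB, mul_zero]
  · refine Finset.sum_eq_zero fun x hx => ?_
    simp only [Finset.mem_filter, Finset.mem_univ, true_and] at hx
    exact absurd (hx ▸ (hg x).1) hB

theorem ind_mem_Usub {T : Type} [Fintype T] [DecidableEq T]
    (P : Set (Finset T)) (hP : IsPartition P) (A : Finset T) (hA : A ∈ P) :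
    (fun x => (Fintype.card T : ℝ) * (if x ∈ A then 1 else 0) - A.card) ∈ Usub P := by
  refine ⟨fun B hB x hx y hy => ?_, ?_⟩
  · have h : x ∈ A ↔ y ∈ A := by
      constructor
      · intro h
        rwa [(hP.2 x).unique ⟨hA, h⟩ ⟨hB, hx⟩]
      · intro h
        rwa [(hP.2 y).unique ⟨hA, h⟩ ⟨hB, hy⟩]
    simp only [h]
  · simp [Finset.sum_sub_distrib]
    ring

/-- The subspaces `U_𝒞` and `U_𝒟` of `ℝ^T` are orthogonal if and only if the partitions
`𝒞` and `𝒟` are independent. -/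
theorem Usub_orthogonal_iff_indep {T : Type} [Fintype T] [DecidableEq T] [Nonempty T]
    (C D : Set (Finset T)) (hC : IsPartition C) (hD : IsPartition D) :
    (∀ u ∈ Usub C, ∀ v ∈ Usub D, ∑ x, u x * v x = 0) ↔
      ∀ B ∈ C, ∀ B' ∈ D, indep B B' := by
  have hn : (Fintype.card T : ℝ) ≠ 0 := by
    exact_mod_cast Fintype.card_ne_zero
  have key : ∀ A A' : Finset T,
      ∑ x ∈ A', ((Fintype.card T : ℝ) * (if x ∈ A then 1 else 0) - A.card)
        = (A ∩ A').card * Fintype.card T - A.card * A'.card := by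
    intro A A'
    rw [Finset.sum_sub_distrib, ← Finset.mul_sum, Finset.sum_ite_mem, Finset.inter_comm A' A]
    simp
    ring
  constructor
  · intro h B hB B' hB'
    have h1 := h _ (ind_mem_Usub C hC B hB) _ (ind_mem_Usub D hD B' hB')
    have h0 := (ind_mem_Usub C hC B hB).2
    have h2 := key B B'
    rw [← Finset.univ_inter B', ← Finset.sum_ite_mem, Finset.univ_inter] at h2
    simp only [mul_sub, Finset.sum_sub_distrib (s := Finset.univ) _ _, ← Finset.sum_mul] at h1
    simp only [Finset.sum_sub_distrib] at h0
    rw [h0, zero_mul, sub_zero] at h1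
    have h3 : (Fintype.card T : ℝ) * ((B ∩ B').card * Fintype.card T - B.card * B'.card) = 0 := by
      rw [← h2, Finset.mul_sum]
      refine Eq.trans ?_ h1
      refine Finset.sum_congr rfl fun x _ => ?_
      split_ifs <;> ring
    have h4 := (mul_eq_zero.mp h3).resolve_left hn
    unfold indep
    exact_mod_cast sub_eq_zero.mp h4
  · intro h u hu v hv
    refine sum_zero_of_blocks C hC u v hu.1 fun B hB => ?_
    have h1 := sum_zero_of_blocks D hD v
      (fun x => (Fintype.card T : ℝ) * (if x ∈ B then 1 else 0) - B.card) hv.1 (by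
        intro B' hB'
        rw [key, sub_eq_zero]
        exact_mod_cast h B hB B' hB')
    simp only [mul_sub, Finset.sum_sub_distrib, ← Finset.sum_mul] at h1
    rw [hv.2, zero_mul, sub_zero] at h1
    have h3 : (Fintype.card T : ℝ) * ∑ x ∈ B, v x = 0 := by
      rw [← Finset.univ_inter B, ← Finset.sum_ite_mem, Finset.mul_sum]
      refine Eq.trans ?_ h1
      refine Finset.sum_congr rfl fun x _ => ?_
      split_ifs <;> ring
    exact (mul_eq_zero.mp h3).resolve_left hn
end

section
/- Let T = A_1 × ⋯ × A_k be a full factorial design and S ⊆ T a simple fraction with maximum strength t (i.e., S has strength t but not strength t + 1). Then S has maximum resolution t + 1: S has resolution t + 1, and S does not have resolution t + 2. Concretely, there exist nonempty disjoint subsets I, J ⊆ {1,…,k} with |I| + |J| = t + 1 and functions u ∈ U_I, v ∈ U_J such that ∑_{s ∈ S} u(s)·v(s) ≠ 0. -/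
/-- The block of the partition `𝒞_I` of the full factorial design `T = ∏ i, A i`
determined by the values `r i` for `i ∈ I`:  `{x ∈ T : x i = r i for all i ∈ I}`. -/
def block {k : ℕ} (A : Fin k → Type) [∀ i, Fintype (A i)] [∀ i, DecidableEq (A i)]
    (I : Finset (Fin k)) (r : ∀ i, A i) : Finset (∀ i, A i) :=
  Finset.univ.filter fun x => ∀ i ∈ I, x i = r i

/-- The partition `𝒞_I` of the full factorial design, viewed as the set of its blocks. -/
def CI {k : ℕ} (A : Fin k → Type) [∀ i, Fintype (A i)] [∀ i, DecidableEq (A i)]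
    (I : Finset (Fin k)) : Set (Finset (∀ i, A i)) :=
  {B | ∃ r : ∀ i, A i, B = block A I r}

/-- A simple fraction `S ⊆ T` has strength `t ≥ 1` if `S` is independent of every block of
the partition `𝒞_I`, for every `I ⊆ {1,…,k}` with `|I| = t`. -/
def hasStrength {k : ℕ} (A : Fin k → Type) [∀ i, Fintype (A i)] [∀ i, DecidableEq (A i)]
    (S : Finset (∀ i, A i)) (t : ℕ) : Prop :=
  ∀ I : Finset (Fin k), I.card = t → ∀ B ∈ CI A I, indep S B

/-- The interaction subspace `U_I ⊆ ℝ^T`, defined inductively: `U_∅` is the space of constant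
functions, and for `I ≠ ∅`, `U_I` consists of the contrast functions in `U_{𝒞_I}` (functions
constant on each block of `𝒞_I` whose values sum to zero) that are orthogonal to `U_J` for
every `J ⊊ I`. -/
def UI {k : ℕ} (A : Fin k → Type) [∀ i, Fintype (A i)] [∀ i, DecidableEq (A i)] :
    Finset (Fin k) → Set ((∀ i, A i) → ℝ)
  | I =>
    if I = ∅ then {u | ∃ c : ℝ, u = fun _ => c}
    else
      {u | (∀ B ∈ CI A I, ∀ x ∈ B, ∀ y ∈ B, u x = u y) ∧ (∑ x, u x = 0) ∧
        ∀ J : Finset (Fin k), J ⊂ I → ∀ v ∈ UI A J, ∑ x, u x * v x = 0}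
  termination_by I => I.card
  decreasing_by exact Finset.card_lt_card (by assumption)

set_option linter.unusedSectionVars false

section helpers

variable {k : ℕ} {A : Fin k → Type} [∀ i, Fintype (A i)] [∀ i, DecidableEq (A i)]

/-- `f` depends only on the coordinates in `K`. -/
def depOn (K : Finset (Fin k)) (f : (∀ i, A i) → ℝ) : Prop :=
  ∀ x y, (∀ i ∈ K, x i = y i) → f x = f y

/-- Summation over one coordinate. -/
noncomputable def sumC (a : Fin k) (f : (∀ i, A i) → ℝ) : (∀ i, A i) → ℝ :=
  fun x => ∑ b, f (Function.update x a b)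

/-- Direct description of the interaction space. -/
def ZI (I : Finset (Fin k)) (f : (∀ i, A i) → ℝ) : Prop :=
  depOn I f ∧ ∀ i ∈ I, ∀ x, sumC i f x = 0

theorem depOn.mono {K L : Finset (Fin k)} {f : (∀ i, A i) → ℝ} (h : depOn K f) (hKL : K ⊆ L) :
    depOn L f := fun x y hxy => h x y fun i hi => hxy i (hKL hi)

theorem depOn.mul {K : Finset (Fin k)} {f g : (∀ i, A i) → ℝ} (hf : depOn K f) (hg : depOn K g) :
    depOn K (fun x => f x * g x) := fun x y hxy => by
  simp only [hf x y hxy, hg x y hxy]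

theorem sumC_of_not_mem {K : Finset (Fin k)} {f : (∀ i, A i) → ℝ} (hf : depOn K f) {a : Fin k}
    (ha : a ∉ K) (x : ∀ i, A i) : sumC a f x = Fintype.card (A a) * f x := by
  unfold sumC
  rw [Finset.sum_congr rfl (g := fun _ => f x)]
  · simp
  · intro b _
    apply hf
    intro i hi
    rw [Function.update_of_ne]
    rintro rfl
    exact ha hi

theorem sumC_dep {K : Finset (Fin k)} {a : Fin k} {f : (∀ i, A i) → ℝ} (hf : depOn (insert a K) f) :
    depOn K (sumC a f) := by
  intro x y hxy
  unfold sumC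
  refine Finset.sum_congr rfl fun b _ => hf _ _ fun i hi => ?_
  by_cases h : i = a
  · subst h; simp
  · rw [Function.update_of_ne h, Function.update_of_ne h]
    exact hxy i ((Finset.mem_insert.1 hi).resolve_left h)

theorem sumC_comm {a b : Fin k} (h : a ≠ b) (f : (∀ i, A i) → ℝ) (x : ∀ i, A i) :
    sumC a (sumC b f) x = sumC b (sumC a f) x := by
  unfold sumC
  rw [Finset.sum_comm]
  refine Finset.sum_congr rfl fun c _ => Finset.sum_congr rfl fun d _ => ?_
  rw [Function.update_comm h]

theorem sumC_adj (a : Fin k) (f g : (∀ i, A i) → ℝ) :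
    ∑ x, sumC a f x * g x = ∑ x, f x * sumC a g x := by
  classical
  unfold sumC
  simp only [Finset.sum_mul, Finset.mul_sum]
  rw [← Finset.sum_product', ← Finset.sum_product']
  refine Finset.sum_nbij' (fun p => (Function.update p.1 a p.2, p.1 a))
    (fun p => (Function.update p.1 a p.2, p.1 a)) ?_ ?_ ?_ ?_ ?_ <;> simp

theorem sum_mul_eq_zero [∀ i, Nonempty (A i)] {K : Finset (Fin k)} {f g : (∀ i, A i) → ℝ}
    {a : Fin k} (hf : ∀ x, sumC a f x = 0) (hg : depOn K g) (ha : a ∉ K) :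
    ∑ x, f x * g x = 0 := by
  have h := sumC_adj a f g
  simp only [hf, zero_mul, Finset.sum_const_zero, sumC_of_not_mem hg ha] at h
  have h3 : (Fintype.card (A a) : ℝ) ≠ 0 := by exact_mod_cast Fintype.card_ne_zero
  have h2 : (Fintype.card (A a) : ℝ) * ∑ x, f x * g x = 0 := by
    rw [Finset.mul_sum, h]
    exact Finset.sum_congr rfl fun x _ => by ring
  exact (mul_eq_zero.1 h2).resolve_left h3

theorem ZI_orth [∀ i, Nonempty (A i)] {I J : Finset (Fin k)} (hIJ : I ≠ J) {f g : (∀ i, A i) → ℝ}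
    (hf : ZI I f) (hg : ZI J g) : ∑ x, f x * g x = 0 := by
  by_cases h : I ⊆ J
  · obtain ⟨a, haJ, haI⟩ := Finset.exists_of_ssubset (lt_of_le_of_ne h hIJ)
    have := sum_mul_eq_zero (hg.2 a haJ) hf.1 haI
    rw [← this]
    exact Finset.sum_congr rfl fun x _ => by ring
  · obtain ⟨a, haI, haJ⟩ := Finset.not_subset.1 h
    exact sum_mul_eq_zero (hf.2 a haI) hg.1 haJ

theorem eq_zero_of_orth (K : Finset (Fin k)) : ∀ (L : Finset (Fin k)) (f : (∀ i, A i) → ℝ),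
    Disjoint K L → depOn (K ∪ L) f → (∀ i ∈ L, ∀ x, sumC i f x = 0) →
    (∀ J ⊆ K ∪ L, ∀ v, ZI J v → ∑ x, f x * v x = 0) → ∀ x, f x = 0 := by
  induction K using Finset.induction_on with
  | empty =>
    intro L f _ hd hz ho x
    rw [Finset.empty_union] at hd
    have h := ho L (by simp) f ⟨hd, hz⟩
    rw [Finset.sum_eq_zero_iff_of_nonneg (fun x _ => mul_self_nonneg (f x))] at h
    simpa using h x (Finset.mem_univ x)
  | insert a K ha ih =>
    intro L f hdis hd hz ho
    rw [Finset.disjoint_insert_left] at hdis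
    obtain ⟨haL, hdis⟩ := hdis
    have hd' : depOn (insert a (K ∪ L)) f := by rwa [Finset.insert_union] at hd
    have haKL : a ∉ K ∪ L := by simp [ha, haL]
    have h0 : ∀ x, sumC a f x = 0 := by
      refine ih L (sumC a f) hdis (sumC_dep hd') ?_ ?_
      · intro i hi x
        have hia : i ≠ a := by rintro rfl; exact haL hi
        rw [sumC_comm hia]
        simp [sumC, fun y => show ∑ b, f (Function.update y i b) = 0 from hz i hi y]
      · intro J hJ v hv
        rw [sumC_adj]
        have haJ : a ∉ J := fun h => haKL (hJ h)
        simp only [sumC_of_not_mem hv.1 haJ]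
        have := ho J (hJ.trans (by rw [Finset.insert_union]; exact Finset.subset_insert _ _)) v hv
        calc ∑ x, f x * (Fintype.card (A a) * v x)
            = Fintype.card (A a) * ∑ x, f x * v x := by
              rw [Finset.mul_sum]; exact Finset.sum_congr rfl fun x _ => by ring
          _ = 0 := by rw [this, mul_zero]
    have he : K ∪ insert a L = insert a K ∪ L := by
      rw [Finset.union_insert, Finset.insert_union]
    refine ih (insert a L) f ?_ ?_ ?_ ?_
    · rw [Finset.disjoint_insert_right]; exact ⟨ha, hdis⟩
    · rwa [he]
    · intro i hi
      rcases Finset.mem_insert.1 hi with rfl | hi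
      · exact h0
      · exact hz i hi
    · rwa [he]

theorem mem_block {I : Finset (Fin k)} {r x : ∀ i, A i} :
    x ∈ block A I r ↔ ∀ i ∈ I, x i = r i := by simp [block]

theorem const_iff {I : Finset (Fin k)} {u : (∀ i, A i) → ℝ} :
    (∀ B ∈ CI A I, ∀ x ∈ B, ∀ y ∈ B, u x = u y) ↔ depOn I u := by
  constructor
  · intro h x y hxy
    exact h (block A I y) ⟨y, rfl⟩ x (mem_block.2 hxy) y (mem_block.2 fun _ _ => rfl)
  · rintro h B ⟨r, rfl⟩ x hx y hy
    rw [mem_block] at hx hy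
    exact h x y fun i hi => (hx i hi).trans (hy i hi).symm

theorem UI_iff [∀ i, Nonempty (A i)] (I : Finset (Fin k)) :
    ∀ u : (∀ i, A i) → ℝ, u ∈ UI A I ↔ ZI I u := by
  induction I using Finset.strongInduction with
  | H I ih =>
    intro u
    rw [UI]
    split_ifs with h
    · subst h
      constructor
      · rintro ⟨c, rfl⟩
        exact ⟨fun _ _ _ => rfl, by simp⟩
      · intro hu
        exact ⟨u (Classical.arbitrary _), funext fun x => hu.1 _ _ (by simp)⟩
    · rw [Set.mem_ofPred_eq, const_iff]
      constructor
      · rintro ⟨hd, _, ho⟩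
        refine ⟨hd, fun i hi => ?_⟩
        have hd' : depOn (insert i (I.erase i)) u := by rwa [Finset.insert_erase hi]
        refine eq_zero_of_orth (I.erase i) ∅ (sumC i u) (by simp) ?_ (by simp) ?_
        · rw [Finset.union_empty]; exact sumC_dep hd'
        · intro J hJ v hv
          rw [Finset.union_empty] at hJ
          have hiJ : i ∉ J := fun hc => by simpa using hJ hc
          have hJI : J ⊂ I := lt_of_le_of_lt hJ (Finset.erase_ssubset hi)
          have := ho J hJI v ((ih J hJI v).2 hv)
          rw [sumC_adj]
          simp only [sumC_of_not_mem hv.1 hiJ]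
          calc ∑ x, u x * (Fintype.card (A i) * v x)
              = Fintype.card (A i) * ∑ x, u x * v x := by
                rw [Finset.mul_sum]; exact Finset.sum_congr rfl fun x _ => by ring
            _ = 0 := by rw [this, mul_zero]
      · intro hu
        refine ⟨hu.1, ?_, ?_⟩
        · have : ZI (A := A) ∅ (fun _ => (1 : ℝ)) := ⟨fun _ _ _ => rfl, by simp⟩
          simpa using ZI_orth h hu this
        · intro J hJ v hv
          exact ZI_orth hJ.ne' hu ((ih J hJ v).1 hv)

theorem strength_sum {S : Finset (∀ i, A i)} {t : ℕ} (h1 : hasStrength A S t)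
    {K : Finset (Fin k)} (hK : K.card = t) {f : (∀ i, A i) → ℝ} (hf : depOn K f) :
    (∑ s ∈ S, f s) * Fintype.card (∀ i, A i) = S.card * ∑ x, f x := by
  have hpos : ∀ r : ∀ i, A i, ((block A K r).card : ℝ) ≠ 0 := fun r => by
    have : r ∈ block A K r := mem_block.2 fun _ _ => rfl
    exact_mod_cast (Finset.card_pos.2 ⟨r, this⟩).ne'
  have hb : ∀ x y : ∀ i, A i, x ∈ block A K y → block A K x = block A K y := by
    intro x y h
    rw [mem_block] at h
    ext z
    rw [mem_block, mem_block]
    exact forall₂_congr fun i hi => by rw [h i hi]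
  have key : ∀ s, ∑ r, (if s ∈ block A K r then f r / (block A K r).card else 0) = f s := by
    intro s
    have : ∀ r, (if s ∈ block A K r then f r / (block A K r).card else 0)
        = if r ∈ block A K s then f s / (block A K s).card else 0 := by
      intro r
      have hc : s ∈ block A K r ↔ r ∈ block A K s := by
        rw [mem_block, mem_block]; exact forall₂_congr fun i _ => eq_comm
      by_cases h : s ∈ block A K r
      · rw [if_pos h, if_pos (hc.1 h), hb _ _ h, hf s r (mem_block.1 h)]
      · rw [if_neg h, if_neg (fun h' => h (hc.2 h'))]
    simp only [this]
    rw [Finset.sum_ite_mem, Finset.univ_inter, Finset.sum_const, nsmul_eq_mul]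
    have := hpos s
    field_simp
  have hS : ∑ s ∈ S, f s = ∑ r, (f r / (block A K r).card) * (S ∩ block A K r).card := by
    rw [← Finset.sum_congr rfl fun s _ => key s, Finset.sum_comm]
    refine Finset.sum_congr rfl fun r _ => ?_
    rw [Finset.sum_ite_mem, Finset.sum_const, nsmul_eq_mul, mul_comm]
  rw [hS, Finset.sum_mul, Finset.mul_sum]
  refine Finset.sum_congr rfl fun r _ => ?_
  have h := h1 K hK (block A K r) ⟨r, rfl⟩
  unfold indep at h
  have h' : ((S ∩ block A K r).card : ℝ) * Fintype.card (∀ i, A i)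
      = S.card * (block A K r).card := by exact_mod_cast h
  rw [mul_assoc, h']
  have := hpos r
  field_simp

/-- The centered indicator of `x i = r i`. -/
noncomputable def cen (r : ∀ i, A i) (i : Fin k) (x : ∀ i, A i) : ℝ :=
  (if x i = r i then 1 else 0) - 1 / Fintype.card (A i)

/-- The indicator of `x i = r i`. -/
noncomputable def ind (r : ∀ i, A i) (i : Fin k) (x : ∀ i, A i) : ℝ :=
  if x i = r i then 1 else 0

theorem prod_cen_ZI [∀ i, Nonempty (A i)] (r : ∀ i, A i) (I : Finset (Fin k)) :
    ZI I (fun x => ∏ i ∈ I, cen r i x) := by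
  refine ⟨fun x y h => Finset.prod_congr rfl fun i hi => by simp [cen, h i hi], ?_⟩
  intro a ha x
  unfold sumC
  have : ∀ b, ∏ i ∈ I, cen r i (Function.update x a b)
      = ((if b = r a then 1 else 0) - 1 / (Fintype.card (A a) : ℝ)) *
        ∏ i ∈ I.erase a, cen r i x := by
    intro b
    rw [← Finset.mul_prod_erase _ _ ha]
    congr 1
    · simp [cen]
    · refine Finset.prod_congr rfl fun i hi => ?_
      simp [cen, Function.update_of_ne (Finset.ne_of_mem_erase hi)]
  simp only [this]
  rw [← Finset.sum_mul, Finset.sum_sub_distrib]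
  have h3 : (Fintype.card (A a) : ℝ) ≠ 0 := by exact_mod_cast Fintype.card_ne_zero
  simp [h3]

theorem defect_eq {S : Finset (∀ i, A i)} {t : ℕ} (h1 : hasStrength A S t)
    {I : Finset (Fin k)} (hI : I.card = t + 1) (r : ∀ i, A i) (M : Finset (Fin k)) :
    M ⊆ I →
    (∑ s ∈ S, (∏ i ∈ M, cen r i s) * ∏ i ∈ I \ M, ind r i s) * Fintype.card (∀ i, A i)
      - S.card * ∑ x, (∏ i ∈ M, cen r i x) * ∏ i ∈ I \ M, ind r i x
    = (∑ s ∈ S, ∏ i ∈ I, ind r i s) * Fintype.card (∀ i, A i)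
      - S.card * ∑ x, ∏ i ∈ I, ind r i x := by
  induction M using Finset.induction_on with
  | empty => simp
  | insert a M ha ih =>
    intro hM
    have haI : a ∈ I := hM (Finset.mem_insert_self _ _)
    have hMI : M ⊆ I := (Finset.subset_insert _ _).trans hM
    rw [← ih hMI]
    set g : (∀ i, A i) → ℝ := fun x => (∏ i ∈ M, cen r i x) * ∏ i ∈ I \ insert a M, ind r i x
      with hg
    have hgd : depOn (I.erase a) g := by
      intro x y h
      simp only [hg]
      congr 1
      · refine Finset.prod_congr rfl fun i hi => ?_
        have : i ∈ I.erase a := Finset.mem_erase.2 ⟨by rintro rfl; exact ha hi, hMI hi⟩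
        simp [cen, h i this]
      · refine Finset.prod_congr rfl fun i hi => ?_
        have : i ∈ I.erase a := by
          simp only [Finset.mem_sdiff, Finset.mem_insert, not_or] at hi
          exact Finset.mem_erase.2 ⟨hi.2.1, hi.1⟩
        simp [ind, h i this]
    have hs := strength_sum h1 (by rw [Finset.card_erase_of_mem haI, hI, Nat.add_sub_cancel]) hgd
    have e : ∀ x, (∏ i ∈ insert a M, cen r i x) * ∏ i ∈ I \ insert a M, ind r i x
        = (∏ i ∈ M, cen r i x) * (∏ i ∈ I \ M, ind r i x) - 1 / Fintype.card (A a) * g x := by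
      intro x
      have hsd : I \ M = insert a (I \ insert a M) := by
        ext i
        simp only [Finset.mem_sdiff, Finset.mem_insert, not_or]
        by_cases h : i = a
        · subst h; simp [haI, ha]
        · simp [h]
      rw [Finset.prod_insert ha, hsd, Finset.prod_insert (by simp)]
      simp only [hg, cen, ind]
      ring
    simp only [e, Finset.sum_sub_distrib, ← Finset.mul_sum]
    linear_combination (-(1 / (Fintype.card (A a) : ℝ))) * hs

end helpers

/-- If a simple fraction `S` has maximum strength `t` (strength `t` but not strength `t+1`),
then `S` has maximum resolution `t + 1`: it has resolution `t + 1` (all `I ≠ J` with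
`|I| + |J| ≤ t` have `Û_I ⊥ Û_J`), and it does not have resolution `t + 2`: there are
nonempty disjoint `I, J` with `|I| + |J| = t + 1` and `u ∈ U_I`, `v ∈ U_J` whose
restrictions to `S` are not orthogonal. -/
theorem max_strength_max_resolution {k : ℕ} (hk : 1 ≤ k) (A : Fin k → Type)
    [∀ i, Fintype (A i)] [∀ i, DecidableEq (A i)] [∀ i, Nonempty (A i)]
    (S : Finset (∀ i, A i)) (t : ℕ) (ht : 1 ≤ t)
    (h1 : hasStrength A S t) (h2 : ¬ hasStrength A S (t + 1)) :
    (∀ I J : Finset (Fin k), I ≠ J → I.card + J.card ≤ t →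
        ∀ u ∈ UI A I, ∀ v ∈ UI A J, ∑ s ∈ S, u s * v s = 0) ∧
      ∃ I J : Finset (Fin k), I.Nonempty ∧ J.Nonempty ∧ Disjoint I J ∧
        I.card + J.card = t + 1 ∧
        ∃ u ∈ UI A I, ∃ v ∈ UI A J, ∑ s ∈ S, u s * v s ≠ 0 := by
  classical
  have hT : (Fintype.card (∀ i, A i) : ℝ) ≠ 0 := by exact_mod_cast Fintype.card_ne_zero
  unfold hasStrength at h2
  push Not at h2
  obtain ⟨I0, hI0, B, ⟨r, rfl⟩, hB⟩ := h2
  constructor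
  · intro I J hIJ hc u hu v hv
    rw [UI_iff] at hu hv
    have htk : t ≤ (Finset.univ : Finset (Fin k)).card := by
      have := Finset.card_le_univ I0
      rw [Finset.card_univ]; omega
    obtain ⟨K, hIK, -, hK⟩ := Finset.exists_subsuperset_card_eq (Finset.subset_univ (I ∪ J))
      ((Finset.card_union_le I J).trans hc) htk
    have h := strength_sum h1 hK ((hu.1.mono (Finset.subset_union_left.trans hIK)).mul
      (hv.1.mono (Finset.subset_union_right.trans hIK)))
    rw [ZI_orth hIJ hu hv, mul_zero] at h
    exact (mul_eq_zero.1 h).resolve_right hT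
  · obtain ⟨a, ha⟩ : I0.Nonempty := Finset.card_pos.1 (by omega)
    have hc : (I0.erase a).card = t := by rw [Finset.card_erase_of_mem ha, hI0]; rfl
    have hne : (I0.erase a).Nonempty := Finset.card_pos.1 (by omega)
    refine ⟨{a}, I0.erase a, by simp, hne, by simp, by simp [hc, add_comm], _,
      (UI_iff _ _).2 (prod_cen_ZI r {a}), _, (UI_iff _ _).2 (prod_cen_ZI r (I0.erase a)), ?_⟩
    intro h0
    have horth := ZI_orth (by
      intro h
      have : a ∈ I0.erase a := by rw [← h]; simp
      simp at this) (prod_cen_ZI r {a}) (prod_cen_ZI r (I0.erase a))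
    have hm : ∀ x, cen r a x * ∏ i ∈ I0.erase a, cen r i x = ∏ i ∈ I0, cen r i x :=
      fun x => Finset.mul_prod_erase I0 (fun i => cen r i x) ha
    simp only [Finset.prod_singleton, hm] at h0 horth
    have hd := defect_eq h1 hI0 r I0 subset_rfl
    simp only [Finset.sdiff_self, Finset.prod_empty, mul_one, h0, horth, zero_mul, mul_zero,
      sub_zero] at hd
    have hi : ∀ x, ∏ i ∈ I0, ind r i x = if x ∈ block A I0 r then (1 : ℝ) else 0 := by
      intro x
      simp only [ind, Finset.prod_ite_zero, Finset.prod_const_one, mem_block]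
    simp only [hi, Finset.sum_ite_mem, Finset.univ_inter, Finset.sum_const, nsmul_eq_mul,
      mul_one] at hd
    apply hB
    unfold indep
    have : ((S ∩ block A I0 r).card : ℝ) * Fintype.card (∀ i, A i)
        = S.card * (block A I0 r).card := by linarith
    exact_mod_cast this
end

section
/- Let T be a nonempty finite set with uniform probability measure π(A) = |A|/|T|, and let B′, B″, S ⊆ T be subsets such that B′ ⫫ S, B″ ⫫ S, and B′ ⫫ B″. Set u = 1_{B′} − π(B′)·1 and v = 1_{B″} − π(B″)·1, where 1_C denotes the indicator function of C. Then ∑_{s ∈ S} u(s)·v(s) = |T|·[π(B′ ∩ B″ ∩ S) − π(B′ ∩ B″)·π(S)] = |B′ ∩ B″ ∩ S| − |B′ ∩ B″|·|S|/|T|. In particular, this sum is nonzero if and only if S is not independent of B′ ∩ B″. -/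
/-- Let `B′, B″, S` be subsets of a nonempty finite set `T` with `B′ ⫫ S`, `B″ ⫫ S` and
`B′ ⫫ B″`, and let `u = 1_{B′} − π(B′)·1`, `v = 1_{B″} − π(B″)·1`, where `π(A) = |A|/|T|`.
Then `∑_{s ∈ S} u(s)·v(s) = |T|·[π(B′ ∩ B″ ∩ S) − π(B′ ∩ B″)·π(S)]
= |B′ ∩ B″ ∩ S| − |B′ ∩ B″|·|S|/|T|`, and this sum is nonzero if and only if `S` is not
independent of `B′ ∩ B″`. -/
theorem indicator_contrast_inner {T : Type} [Fintype T] [DecidableEq T] [Nonempty T]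
    (B' B'' S : Finset T) (h1 : indep B' S) (h2 : indep B'' S) (h3 : indep B' B'')
    (u v : T → ℝ)
    (hu : u = fun x => (if x ∈ B' then (1 : ℝ) else 0) - (B'.card : ℝ) / Fintype.card T)
    (hv : v = fun x => (if x ∈ B'' then (1 : ℝ) else 0) - (B''.card : ℝ) / Fintype.card T) :
    (∑ s ∈ S, u s * v s =
        (Fintype.card T : ℝ) *
          (((B' ∩ B'' ∩ S).card : ℝ) / Fintype.card T -
            ((B' ∩ B'').card : ℝ) / Fintype.card T * ((S.card : ℝ) / Fintype.card T))) ∧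
    (∑ s ∈ S, u s * v s =
        ((B' ∩ B'' ∩ S).card : ℝ) - ((B' ∩ B'').card : ℝ) * S.card / Fintype.card T) ∧
    (∑ s ∈ S, u s * v s ≠ 0 ↔ ¬ indep (B' ∩ B'') S) := by
  unfold indep at *
  have hT : (Fintype.card T : ℝ) ≠ 0 := by
    exact_mod_cast Fintype.card_ne_zero
  have h1r : ((B' ∩ S).card : ℝ) * Fintype.card T = B'.card * S.card := by exact_mod_cast h1
  have h2r : ((B'' ∩ S).card : ℝ) * Fintype.card T = B''.card * S.card := by exact_mod_cast h2
  have h3r : ((B' ∩ B'').card : ℝ) * Fintype.card T = B'.card * B''.card := by exact_mod_cast h3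
  have ind : ∀ C : Finset T, ∑ s ∈ S, (if s ∈ C then (1 : ℝ) else 0) = ((C ∩ S).card : ℝ) := by
    intro C
    rw [Finset.sum_boole, Finset.filter_mem_eq_inter, Finset.inter_comm]
  have e1 : ((B' ∩ S).card : ℝ) = B'.card * S.card / Fintype.card T := by
    rw [eq_div_iff hT]; exact h1r
  have e2 : ((B'' ∩ S).card : ℝ) = B''.card * S.card / Fintype.card T := by
    rw [eq_div_iff hT]; exact h2r
  have e3 : ((B' ∩ B'').card : ℝ) = B'.card * B''.card / Fintype.card T := by
    rw [eq_div_iff hT]; exact h3r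
  have key : ∑ s ∈ S, u s * v s =
      ((B' ∩ B'' ∩ S).card : ℝ) - ((B' ∩ B'').card : ℝ) * S.card / Fintype.card T := by
    have expand : ∀ s ∈ S, u s * v s =
        (if s ∈ B' ∩ B'' then (1 : ℝ) else 0)
          - (B''.card : ℝ) / Fintype.card T * (if s ∈ B' then (1 : ℝ) else 0)
          - (B'.card : ℝ) / Fintype.card T * (if s ∈ B'' then (1 : ℝ) else 0)
          + (B'.card : ℝ) / Fintype.card T * ((B''.card : ℝ) / Fintype.card T) := by
      intro s _
      subst hu hv
      by_cases a : s ∈ B' <;> by_cases b : s ∈ B'' <;> simp [a, b] <;> ring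
    rw [Finset.sum_congr rfl expand, Finset.sum_add_distrib, Finset.sum_sub_distrib,
      Finset.sum_sub_distrib, ← Finset.mul_sum, ← Finset.mul_sum, ind, ind, ind,
      Finset.sum_const, nsmul_eq_mul, e1, e2, e3]
    ring
  refine ⟨?_, key, ?_⟩
  · rw [key]
    field_simp
  · rw [key, not_iff_not, sub_eq_zero, eq_div_iff hT]
    exact_mod_cast Iff.rfl
end

section
/- Let T = A_1 × ⋯ × A_k be a full factorial design and I ⊆ {1,…,k}. The interaction subspaces U_J for J ⊆ I are pairwise orthogonal in ℝ^T, and their (internal) direct sum equals the subspace of all functions in ℝ^T that are constant on each block of the partition 𝒞_I. -/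
section Helpers
set_option linter.unusedSectionVars false


variable {k : ℕ} {A : Fin k → Type} [∀ i, Fintype (A i)] [∀ i, DecidableEq (A i)]

/-- `u` depends only on the coordinates in `I`. -/
def DepOn (I : Finset (Fin k)) (u : (∀ i, A i) → ℝ) : Prop :=
  ∀ x y : ∀ i, A i, (∀ i ∈ I, x i = y i) → u x = u y

lemma depOn_iff (I : Finset (Fin k)) (u : (∀ i, A i) → ℝ) :
    (∀ B ∈ CI A I, ∀ x ∈ B, ∀ y ∈ B, u x = u y) ↔ DepOn I u := by
  constructor
  · intro h x y hxy
    exact h (block A I y) ⟨y, rfl⟩ x (by simpa [block] using hxy) y (by simp [block])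
  · rintro h B ⟨r, rfl⟩ x hx y hy
    simp only [block, Finset.mem_filter, Finset.mem_univ, true_and] at hx hy
    exact h x y fun i hi => (hx i hi).trans (hy i hi).symm

/-- Averaging over coordinate `i`. -/
noncomputable def avg (i : Fin k) (u : (∀ i, A i) → ℝ) : (∀ i, A i) → ℝ :=
  fun x => (Fintype.card (A i) : ℝ)⁻¹ * ∑ a, u (Function.update x i a)

lemma sum_avg [∀ i, Nonempty (A i)] (i : Fin k) (F : (∀ i, A i) → ℝ) :
    ∑ x, avg i F x = ∑ x, F x := by
  have hc : (Fintype.card (A i) : ℝ) ≠ 0 := by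
    exact_mod_cast Fintype.card_ne_zero
  have h : ∑ p : (∀ i, A i) × A i, F (Function.update p.1 i p.2)
      = ∑ p : (∀ i, A i) × A i, F p.1 := by
    refine Finset.sum_nbij' (fun p => (Function.update p.1 i p.2, p.1 i))
      (fun p => (Function.update p.1 i p.2, p.1 i)) ?_ ?_ ?_ ?_ ?_ <;> simp
  rw [Fintype.sum_prod_type, Fintype.sum_prod_type] at h
  simp only [avg]
  rw [← Finset.mul_sum, h]
  simp [← Finset.mul_sum, hc]

lemma avg_mul (i : Fin k) (u v : (∀ i, A i) → ℝ)
    (hv : ∀ x a, v (Function.update x i a) = v x) :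
    avg i (fun x => u x * v x) = fun x => avg i u x * v x := by
  funext x
  simp [avg, hv, ← Finset.sum_mul, mul_assoc]

lemma sum_avg_mul [∀ i, Nonempty (A i)] (i : Fin k) (u v : (∀ i, A i) → ℝ)
    (hv : ∀ x a, v (Function.update x i a) = v x) :
    ∑ x, avg i u x * v x = ∑ x, u x * v x := by
  rw [← sum_avg i (fun x => u x * v x), avg_mul i u v hv]

lemma avg_update (i : Fin k) (u : (∀ i, A i) → ℝ) (x : ∀ i, A i) (a : A i) :
    avg i u (Function.update x i a) = avg i u x := by
  simp [avg]

lemma avg_avg [∀ i, Nonempty (A i)] (i : Fin k) (u : (∀ i, A i) → ℝ) :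
    avg i (avg i u) = avg i u := by
  have hc : (Fintype.card (A i) : ℝ) ≠ 0 := by
    exact_mod_cast Fintype.card_ne_zero
  funext x
  conv_lhs => rw [avg]
  simp [avg_update, hc]

lemma avg_sub (i : Fin k) (u v : (∀ i, A i) → ℝ) :
    avg i (u - v) = avg i u - avg i v := by
  funext x
  simp [avg, mul_sub]

lemma avg_add (i : Fin k) (u v : (∀ i, A i) → ℝ) :
    avg i (u + v) = avg i u + avg i v := by
  funext x
  simp [avg, mul_add, Finset.sum_add_distrib]

lemma avg_smul (i : Fin k) (c : ℝ) (u : (∀ i, A i) → ℝ) :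
    avg i (c • u) = c • avg i u := by
  funext x
  simp [avg, ← Finset.mul_sum, mul_left_comm]

lemma avg_zero (i : Fin k) : avg i (0 : (∀ i, A i) → ℝ) = 0 := by
  funext x
  simp [avg]

lemma avg_comm {i j : Fin k} (hij : i ≠ j) (u : (∀ i, A i) → ℝ) :
    avg i (avg j u) = avg j (avg i u) := by
  funext x
  simp only [avg, ← Finset.mul_sum]
  rw [mul_left_comm, Finset.sum_comm]
  congr 2
  refine Finset.sum_congr rfl fun a _ => Finset.sum_congr rfl fun b _ => ?_
  rw [Function.update_comm hij]

lemma DepOn.avg {I J : Finset (Fin k)} {i : Fin k} {u : (∀ i, A i) → ℝ}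
    (h : DepOn I u) (hJ : ∀ j ∈ I, j ≠ i → j ∈ J) : DepOn J (avg i u) := by
  intro x y hxy
  simp only [_root_.avg]
  congr 1
  refine Finset.sum_congr rfl fun a _ => h _ _ fun j hj => ?_
  by_cases hji : j = i
  · subst hji; simp
  · simp [hji, hxy j (hJ j hj hji)]

lemma DepOn.mono {I J : Finset (Fin k)} {u : (∀ i, A i) → ℝ}
    (h : DepOn I u) (hIJ : I ⊆ J) : DepOn J u :=
  fun x y hxy => h x y fun i hi => hxy i (hIJ hi)

lemma DepOn.update {I : Finset (Fin k)} {u : (∀ i, A i) → ℝ} (h : DepOn I u)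
    {i : Fin k} (hi : i ∉ I) (x : ∀ i, A i) (a : A i) :
    u (Function.update x i a) = u x := by
  refine h _ _ fun j hj => ?_
  have : j ≠ i := by rintro rfl; exact hi hj
  simp [this]

/-- Explicit description of the interaction subspaces. -/
noncomputable def WI (A : Fin k → Type) [∀ i, Fintype (A i)] [∀ i, DecidableEq (A i)]
    (I : Finset (Fin k)) : Submodule ℝ ((∀ i, A i) → ℝ) where
  carrier := {u | DepOn I u ∧ ∀ i ∈ I, avg i u = 0}
  add_mem' := by
    rintro u v ⟨hu, hu'⟩ ⟨hv, hv'⟩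
    refine ⟨fun x y hxy => ?_, fun i hi => ?_⟩
    · simp [hu x y hxy, hv x y hxy]
    · rw [avg_add, hu' i hi, hv' i hi, add_zero]
  zero_mem' := ⟨fun _ _ _ => rfl, fun i _ => avg_zero i⟩
  smul_mem' := by
    rintro c u ⟨hu, hu'⟩
    refine ⟨fun x y hxy => ?_, fun i hi => ?_⟩
    · simp [hu x y hxy]
    · rw [avg_smul, hu' i hi, smul_zero]

lemma mem_WI {I : Finset (Fin k)} {u : (∀ i, A i) → ℝ} :
    u ∈ WI A I ↔ DepOn I u ∧ ∀ i ∈ I, avg i u = 0 := Iff.rfl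

lemma WI_orth [∀ i, Nonempty (A i)] {I J : Finset (Fin k)} (h : ¬ I ⊆ J)
    {u v : (∀ i, A i) → ℝ} (hu : u ∈ WI A I) (hv : DepOn J v) :
    ∑ x, u x * v x = 0 := by
  obtain ⟨i, hi, hiJ⟩ := Finset.not_subset.1 h
  rw [← sum_avg_mul i u v (hv.update hiJ), hu.2 i hi]
  simp

lemma mem_iSup_aux [∀ i, Nonempty (A i)] (L : Finset (Fin k)) :
    ∀ (K : Finset (Fin k)) (f : (∀ i, A i) → ℝ), DepOn (K ∪ L) f → Disjoint K L →
      (∀ i ∈ K, avg i f = 0) → f ∈ ⨆ J ∈ (K ∪ L).powerset, WI A J := by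
  induction L using Finset.induction_on with
  | empty =>
    intro K f hf _ hK
    rw [Finset.union_empty] at *
    exact Submodule.mem_iSup_of_mem K
      (Submodule.mem_iSup_of_mem (Finset.mem_powerset_self K) ⟨hf, hK⟩)
  | insert i L hi ih =>
    intro K f hf hd hK
    rw [Finset.disjoint_insert_right] at hd
    have h1 : avg i f ∈ ⨆ J ∈ (K ∪ L).powerset, WI A J := by
      refine ih K _ (hf.avg fun j hj hji => ?_) hd.2 fun j hj => ?_
      · simp only [Finset.mem_union, Finset.mem_insert] at hj ⊢; tauto
      · have : j ≠ i := by rintro rfl; exact hd.1 hj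
        rw [avg_comm this, hK j hj, avg_zero] 
    have h2 : f - avg i f ∈ ⨆ J ∈ (insert i K ∪ L).powerset, WI A J := by
      have e : K ∪ insert i L = insert i K ∪ L := by
        simp
      rw [e] at hf
      refine ih (insert i K) _ (fun x y hxy => ?_) ?_ fun j hj => ?_
      · have h3 : DepOn (insert i K ∪ L) (avg i f) := hf.avg fun j hj _ => hj
        simp [hf x y hxy, h3 x y hxy]
      · rw [Finset.disjoint_insert_left]; exact ⟨hi, hd.2⟩
      · rw [avg_sub]
        by_cases hji : j = i
        · subst hji; rw [avg_avg, sub_self]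
        · have hj' : j ∈ K := (Finset.mem_insert.1 hj).resolve_left hji
          rw [avg_comm hji, hK j hj', avg_zero, sub_zero] 
    have m : ∀ S : Finset (Fin k), S ⊆ K ∪ insert i L →
        (⨆ J ∈ S.powerset, WI A J) ≤ ⨆ J ∈ (K ∪ insert i L).powerset, WI A J :=
      fun S hS => biSup_mono fun J hJ => Finset.powerset_mono.2 hS hJ
    have := add_mem (m _ (by gcongr; simp) h1) (m _ (by simp) h2)
    simpa using this

lemma exists_decomp [∀ i, Nonempty (A i)] {I : Finset (Fin k)} {f : (∀ i, A i) → ℝ}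
    (hf : DepOn I f) : ∃ g : Finset (Fin k) → ((∀ i, A i) → ℝ),
      (∀ J, g J ∈ WI A J) ∧ f = fun x => ∑ J ∈ I.powerset, g J x := by
  have h := mem_iSup_aux I ∅ f (by simpa using hf) (by simp) (by simp)
  rw [Finset.empty_union, Submodule.mem_iSup_finset_iff_exists_sum] at h
  obtain ⟨μ, hμ⟩ := h
  refine ⟨fun J => μ J, fun J => (μ J).2, ?_⟩
  rw [← hμ]
  funext x
  simp

lemma UI_eq [∀ i, Nonempty (A i)] (I : Finset (Fin k)) : UI A I = (WI A I : Set _) := by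
  induction I using Finset.strongInduction with
  | H I ih =>
    rw [UI]
    split_ifs with h
    · subst h
      ext u
      simp only [Set.mem_ofPred_eq, SetLike.mem_coe, mem_WI]
      constructor
      · rintro ⟨c, rfl⟩
        exact ⟨fun _ _ _ => rfl, by simp⟩
      · rintro ⟨hu, -⟩
        exact ⟨u fun i => Classical.arbitrary _, funext fun x => hu _ _ (by simp)⟩
    · ext u
      simp only [Set.mem_ofPred_eq, SetLike.mem_coe, depOn_iff]
      constructor
      · rintro ⟨hu, -, ho⟩
        refine ⟨hu, fun i hi => ?_⟩
        have hd : DepOn (I.erase i) (avg i u) :=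
          hu.avg fun j hj hji => Finset.mem_erase.2 ⟨hji, hj⟩
        obtain ⟨g, hg, hs⟩ := exists_decomp hd
        have h0 : ∑ x, avg i u x * avg i u x = 0 := by
          rw [sum_avg_mul i u (avg i u) (avg_update i u)]
          rw [hs]
          simp only [Finset.mul_sum]
          rw [Finset.sum_comm]
          refine Finset.sum_eq_zero fun J hJ => ?_
          have hJI : J ⊂ I :=
            (Finset.mem_powerset.1 hJ).trans_ssubset (Finset.erase_ssubset hi)
          exact ho J hJI _ (by rw [ih J hJI]; exact hg J)
        rw [Finset.sum_eq_zero_iff_of_nonneg fun x _ => mul_self_nonneg _] at h0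
        funext x
        simpa using h0 x (Finset.mem_univ x)
      · intro hu
        refine ⟨hu.1, ?_, fun J hJ v hv => ?_⟩
        · have := WI_orth (J := ∅) (v := fun _ => 1) (by simpa using h) hu
            (fun _ _ _ => rfl)
          simpa using this
        · rw [ih J hJ] at hv
          exact WI_orth hJ.2 hu hv.1

end Helpers

/-- The interaction subspaces `U_J`, `J ⊆ I`, are pairwise orthogonal in `ℝ^T`, and their
internal direct sum is the subspace of all functions in `ℝ^T` that are constant on each block
of the partition `𝒞_I`: a function `f` is constant on each block of `𝒞_I` iff it decomposes
as `f = ∑_{J ⊆ I} g_J` with `g_J ∈ U_J` for every `J ⊆ I`. -/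
theorem interaction_decomposition {k : ℕ} (hk : 1 ≤ k) (A : Fin k → Type)
    [∀ i, Fintype (A i)] [∀ i, DecidableEq (A i)] [∀ i, Nonempty (A i)]
    (I : Finset (Fin k)) :
    (∀ J₁ ∈ I.powerset, ∀ J₂ ∈ I.powerset, J₁ ≠ J₂ →
        ∀ u ∈ UI A J₁, ∀ v ∈ UI A J₂, ∑ x, u x * v x = 0) ∧
      ∀ f : (∀ i, A i) → ℝ,
        (∀ B ∈ CI A I, ∀ x ∈ B, ∀ y ∈ B, f x = f y) ↔
          ∃ g : Finset (Fin k) → ((∀ i, A i) → ℝ),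
            (∀ J ∈ I.powerset, g J ∈ UI A J) ∧
            f = fun x => ∑ J ∈ I.powerset, g J x := by
  refine ⟨fun J₁ _ J₂ _ hne u hu v hv => ?_, fun f => ?_⟩
  · rw [UI_eq] at hu hv
    by_cases h : J₁ ⊆ J₂
    · have h' : ¬ J₂ ⊆ J₁ := fun h' => hne (h.antisymm h')
      simpa only [mul_comm] using WI_orth h' hv hu.1
    · exact WI_orth h hu hv.1
  · rw [depOn_iff]
    constructor
    · intro hf
      obtain ⟨g, hg, hs⟩ := exists_decomp hf
      exact ⟨g, fun J _ => by rw [UI_eq]; exact hg J, hs⟩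
    · rintro ⟨g, hg, rfl⟩ x y hxy
      refine Finset.sum_congr rfl fun J hJ => ?_
      have := hg J hJ
      rw [UI_eq] at this
      exact (this.1.mono (Finset.mem_powerset.1 hJ)) x y hxy
end
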